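/- Let k be a field, n a natural number, and A and B noetherian k-algebras such that A ⊗_k B is noetherian. If A and B both satisfy the condition (C_n) and at least one of them satisfies Serre's condition (S_n), then A ⊗_k B satisfies the condition (C_n). -/

import Mathlib

noncomputable section

open TensorProduct

universe u v w





/-- The depth of the ideal `I` on the module `M`: the supremum of lengths of
`M`-regular sequences with entries in `I`. -/
noncomputable def idealDepth (A : Type u) [CommRing A] (I : Ideal A)
    (M : Type v) [AddCommGroup M] [Module A M] : ℕ∞ :=
  sSup {n : ℕ∞ | ∃ rs : List A, (rs.length : ℕ∞) = n ∧ (∀ r ∈ rs, r ∈ I) ∧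
    RingTheory.Sequence.IsRegular M rs}

/-- The depth of a module over a local ring. -/
noncomputable def localDepth (A : Type u) [CommRing A] [IsLocalRing A]
    (M : Type v) [AddCommGroup M] [Module A M] : ℕ∞ :=
  idealDepth A (IsLocalRing.maximalIdeal A) M

/-- The (Krull) dimension of a module, i.e. the Krull dimension of its support. -/
noncomputable def supportDim (A : Type u) [CommRing A]
    (M : Type v) [AddCommGroup M] [Module A M] : WithBot ℕ∞ :=
  Order.krullDim (Module.support A M)

/-- `depth (M_P)` : the depth of the localization of `M` at a prime `P`,
over the local ring `A_P`. -/
noncomputable def depthAt (A : Type u) [CommRing A]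
    (M : Type v) [AddCommGroup M] [Module A M] (P : PrimeSpectrum A) : ℕ∞ :=
  localDepth (Localization.AtPrime P.asIdeal) (LocalizedModule P.asIdeal.primeCompl M)

/-- `ht_M(P) = dim (M_P)` : the height of a prime `P` in the support of `M`,
i.e. the dimension of the localized module `M_P` over `A_P`. -/
noncomputable def heightAt (A : Type u) [CommRing A]
    (M : Type v) [AddCommGroup M] [Module A M] (P : PrimeSpectrum A) : WithBot ℕ∞ :=
  supportDim (Localization.AtPrime P.asIdeal) (LocalizedModule P.asIdeal.primeCompl M)

/-- Serre's condition `(S_n)` for a module: for every `P` in the support,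
`depth (M_P) ≥ min (n, ht_M(P))`. -/
def SerreCondS (A : Type u) [CommRing A] (n : ℕ)
    (M : Type v) [AddCommGroup M] [Module A M] : Prop :=
  ∀ P ∈ Module.support A M,
    min (n : WithBot ℕ∞) (heightAt A M P) ≤ (depthAt A M P : WithBot ℕ∞)

/-- The condition `(C_n)` for a module: for every `P` in the support,
`depth (M_P) ≥ min (n, ht_M(P)) - 1`, equivalently
`min (n, ht_M(P)) ≤ depth (M_P) + 1`. -/
def CondC (A : Type u) [CommRing A] (n : ℕ)
    (M : Type v) [AddCommGroup M] [Module A M] : Prop :=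
  ∀ P ∈ Module.support A M,
    min (n : WithBot ℕ∞) (heightAt A M P) ≤ (depthAt A M P : WithBot ℕ∞) + 1

/-- A module `M` is almost Cohen-Macaulay if `depth(P, M) = depth (M_P)` for every
`P` in the support of `M` (Kang's definition). -/
def IsAlmostCMModule (A : Type u) [CommRing A]
    (M : Type v) [AddCommGroup M] [Module A M] : Prop :=
  ∀ P ∈ Module.support A M, idealDepth A P.asIdeal M = depthAt A M P

/-- A module `M` is Cohen-Macaulay if `depth (M_P) = dim (M_P)` for every `P` in its
support. -/
def IsCMModule (A : Type u) [CommRing A]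
    (M : Type v) [AddCommGroup M] [Module A M] : Prop :=
  ∀ P ∈ Module.support A M, (depthAt A M P : WithBot ℕ∞) = heightAt A M P

/-- A ring is almost Cohen-Macaulay if it is an almost Cohen-Macaulay module over
itself. -/
abbrev IsAlmostCMRing (A : Type u) [CommRing A] : Prop := IsAlmostCMModule A A

/-- A ring is Cohen-Macaulay if it is a Cohen-Macaulay module over itself, i.e. all its
localizations at primes have depth equal to dimension. -/
abbrev IsCMRing (A : Type u) [CommRing A] : Prop := IsCMModule A A

/-- A ring satisfies `(C_n)` if it does so as a module over itself. -/
abbrev RingCondC (A : Type u) [CommRing A] (n : ℕ) : Prop := CondC A n A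

/-- A ring satisfies `(S_n)` if it does so as a module over itself. -/
abbrev RingSerreCondS (A : Type u) [CommRing A] (n : ℕ) : Prop := SerreCondS A n A

lemma lTensor_injective_of_le_annihilator {R : Type*} [CommRing R] {N : Type*} [AddCommGroup N]
    [Module R N] (m : Ideal R) [m.IsMaximal] {φ : N →ₗ[R] N}
    (hφ : Function.Injective (φ.lTensor (R ⧸ m)))
    (M : Type*) [AddCommGroup M] [Module R M] (hM : m ≤ Module.annihilator R M) :
    Function.Injective (φ.lTensor M) := by
  let : Field (R ⧸ m) := Ideal.Quotient.field m
  have htor : Module.IsTorsionBySet R M m := fun x a => Module.mem_annihilator.mp (hM a.2) x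
  let : Module (R ⧸ m) M := htor.module
  have : IsScalarTower R (R ⧸ m) M := htor.isScalarTower
  have hinj : Function.Injective (φ.baseChange (R ⧸ m)) := hφ
  have key := Module.Flat.lTensor_preserves_injective_linearMap (M := M) _ hinj
  let e := AlgebraTensorModule.cancelBaseChange R (R ⧸ m) (R ⧸ m) M N
  have comm : ∀ z, φ.lTensor M (e z) = e ((φ.baseChange (R ⧸ m)).lTensor M z) := by
    intro z
    induction z with
    | zero => simp
    | add a b ha hb => simp only [map_add, ha, hb]
    | tmul x w =>
      induction w with
      | zero => simp
      | add a b ha hb => simp only [tmul_add, map_add, ha, hb]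
      | tmul a b => simp [e]
  intro a b hab
  obtain ⟨a, rfl⟩ := e.surjective a
  obtain ⟨b, rfl⟩ := e.surjective b
  rw [comm, comm] at hab
  exact congrArg e (key (e.injective hab))

lemma lTensor_injective_of_exact {R : Type*} [CommRing R] {N : Type*} [AddCommGroup N]
    [Module R N] [Module.Flat R N] {φ : N →ₗ[R] N} {M : Type*} [AddCommGroup M] [Module R M]
    (M' : Submodule R M) (h' : Function.Injective (φ.lTensor M'))
    (h'' : Function.Injective (φ.lTensor (M ⧸ M'))) : Function.Injective (φ.lTensor M) := by
  have hexact : Function.Exact (M'.subtype.rTensor N) (M'.mkQ.rTensor N) :=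
    rTensor_exact N (LinearMap.exact_subtype_mkQ M') M'.mkQ_surjective
  have hsub : Function.Injective (M'.subtype.rTensor N) :=
    Module.Flat.rTensor_preserves_injective_linearMap _ M'.injective_subtype
  rw [injective_iff_map_eq_zero]
  intro z hz
  have h1 : M'.mkQ.rTensor N z = 0 := by
    apply h''
    rw [map_zero, ← LinearMap.comp_apply, LinearMap.lTensor_comp_rTensor,
      ← LinearMap.rTensor_comp_lTensor, LinearMap.comp_apply, hz, map_zero]
  obtain ⟨w, rfl⟩ := (hexact z).mp h1
  have h2 : φ.lTensor M' w = 0 := by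
    apply hsub
    rw [map_zero, ← hz, ← LinearMap.comp_apply, ← LinearMap.comp_apply,
      LinearMap.lTensor_comp_rTensor, ← LinearMap.rTensor_comp_lTensor]
  rw [(injective_iff_map_eq_zero _).mp h' w h2, map_zero]

lemma lTensor_injective_of_pow_le_annihilator {R : Type*} [CommRing R] {N : Type*}
    [AddCommGroup N] [Module R N] [Module.Flat R N] (m : Ideal R) [m.IsMaximal] {φ : N →ₗ[R] N}
    (hφ : Function.Injective (φ.lTensor (R ⧸ m))) (k : ℕ)
    (M : Type*) [AddCommGroup M] [Module R M] (hM : m ^ k ≤ Module.annihilator R M) :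
    Function.Injective (φ.lTensor M) := by
  induction k generalizing M with
  | zero =>
    have : Subsingleton M := by
      rw [← Module.annihilator_eq_top_iff (R := R)]
      simpa using hM
    exact Function.injective_of_subsingleton _
  | succ k ih =>
    refine lTensor_injective_of_exact (m • ⊤ : Submodule R M) (ih _ ?_)
      (lTensor_injective_of_le_annihilator m hφ _ ?_)
    · intro a ha
      rw [Module.mem_annihilator]
      rintro ⟨x, hx⟩
      ext
      simp only [SetLike.mk_smul_mk, ZeroMemClass.coe_zero]
      refine Submodule.smul_induction_on hx (fun r hr y _ => ?_) fun x y hx hy => ?_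
      · rw [smul_smul]
        exact Module.mem_annihilator.mp (hM (pow_succ m k ▸ Ideal.mul_mem_mul ha hr)) y
      · rw [smul_add, hx, hy, add_zero]
    · intro a ha
      rw [Module.mem_annihilator]
      intro x
      obtain ⟨x, rfl⟩ := Submodule.Quotient.mk_surjective _ x
      rw [← Submodule.Quotient.mk_smul, Submodule.Quotient.mk_eq_zero]
      exact Submodule.smul_mem_smul ha trivial

lemma lTensor_quotient_injective_iff {R : Type*} [CommRing R] {N : Type*} [AddCommGroup N]
    [Module R N] (I : Ideal R) (φ : N →ₗ[R] N) :
    Function.Injective (φ.lTensor (R ⧸ I)) ↔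
      ∀ z, φ z ∈ I • (⊤ : Submodule R N) → z ∈ I • (⊤ : Submodule R N) := by
  let e := quotTensorEquivQuotSMul N I
  have comm : ∀ z, φ.lTensor (R ⧸ I) (e.symm (Submodule.Quotient.mk z)) =
      e.symm (Submodule.Quotient.mk (φ z)) := fun z => by simp [e]
  rw [injective_iff_map_eq_zero]
  constructor
  · intro h z hz
    have := h (e.symm (Submodule.Quotient.mk z))
      (by rw [comm, (Submodule.Quotient.mk_eq_zero _).mpr hz, map_zero])
    rwa [LinearEquiv.map_eq_zero_iff, Submodule.Quotient.mk_eq_zero] at this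
  · intro h z hz
    obtain ⟨z, rfl⟩ := e.symm.surjective z
    obtain ⟨z, rfl⟩ := Submodule.Quotient.mk_surjective _ z
    rw [comm, LinearEquiv.map_eq_zero_iff, Submodule.Quotient.mk_eq_zero] at hz
    rw [LinearEquiv.map_eq_zero_iff, Submodule.Quotient.mk_eq_zero]
    exact h z hz

open IsLocalRing in
/-- Regularity modulo the maximal ideal of the base propagates to all quotients by ideals of the
base. -/
lemma mem_ideal_smul_top_of_smul_mem {R S : Type*} [CommRing R] [IsLocalRing R] [CommRing S]
    [IsLocalRing S] [IsNoetherianRing S] [Algebra R S] [IsLocalHom (algebraMap R S)]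
    {N : Type*} [AddCommGroup N] [Module R N] [Module S N] [IsScalarTower R S N]
    [Module.Finite S N] [Module.Flat R N] {y : S}
    (hy : ∀ z : N, y • z ∈ maximalIdeal R • (⊤ : Submodule R N) →
      z ∈ maximalIdeal R • (⊤ : Submodule R N)) (I : Ideal R) (z : N)
    (hz : y • z ∈ I • (⊤ : Submodule R N)) : z ∈ I • (⊤ : Submodule R N) := by
  let φ : N →ₗ[R] N := (LinearMap.lsmul S N y).restrictScalars R
  have hφ : Function.Injective (φ.lTensor (R ⧸ maximalIdeal R)) :=
    (lTensor_quotient_injective_iff _ φ).mpr hy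
  let IN : Submodule S N := I.map (algebraMap R S) • ⊤
  have hIN (J : Ideal R) (x : N) :
      x ∈ J.map (algebraMap R S) • (⊤ : Submodule S N) ↔ x ∈ J • (⊤ : Submodule R N) := by
    rw [← Submodule.restrictScalars_mem R, Ideal.smul_restrictScalars,
      Submodule.restrictScalars_top]
  have hne : (maximalIdeal R).map (algebraMap R S) ≠ ⊤ :=
    ne_top_of_le_ne_top (maximalIdeal.isMaximal S).ne_top
      (((local_hom_TFAE (algebraMap R S)).out 0 2).mp ‹_›)
  have hbot := Ideal.iInf_pow_smul_eq_bot_of_isLocalRing (M := N ⧸ IN) _ hne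
  rw [← hIN]
  change z ∈ IN
  rw [← Submodule.Quotient.mk_eq_zero, ← Submodule.mem_bot S, ← hbot, Submodule.mem_iInf]
  intro k
  have hzk : z ∈ (I ⊔ maximalIdeal R ^ k) • (⊤ : Submodule R N) := by
    refine (lTensor_quotient_injective_iff _ φ).mp
      (lTensor_injective_of_pow_le_annihilator _ hφ k _ ?_) z
      (Submodule.smul_mono_left le_sup_left hz)
    rw [Ideal.annihilator_quotient]
    exact le_sup_right
  rw [← hIN, Ideal.map_sup, Submodule.sup_smul, Ideal.map_pow] at hzk
  obtain ⟨a, ha, b, hb, rfl⟩ := Submodule.mem_sup.mp hzk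
  rw [Submodule.Quotient.mk_add, (Submodule.Quotient.mk_eq_zero _).mpr ha, zero_add]
  have := Submodule.mem_map_of_mem (f := IN.mkQ) hb
  rw [Submodule.map_smul''] at this
  exact Submodule.smul_mono le_rfl le_top this

/-- The cokernel of an endomorphism of a flat module is flat if the endomorphism is injective
modulo every ideal. -/
lemma flat_of_exact_of_forall_mem_smul_top {R : Type*} [CommRing R] {N N' : Type*}
    [AddCommGroup N] [Module R N] [AddCommGroup N'] [Module R N'] [Module.Flat R N]
    {φ : N →ₗ[R] N} {π : N →ₗ[R] N'} (hπ : Function.Surjective π) (hexact : Function.Exact φ π)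
    (hφ : ∀ (I : Ideal R) (z : N), φ z ∈ I • (⊤ : Submodule R N) →
      z ∈ I • (⊤ : Submodule R N)) :
    Module.Flat R N' := by
  rw [Module.Flat.iff_rTensor_injective']
  intro I
  have hsub : Function.Injective (I.subtype.rTensor N) :=
    Module.Flat.rTensor_preserves_injective_linearMap _ I.injective_subtype
  have hmem (s : N) (hs : s ∈ I • (⊤ : Submodule R N)) :
      ∃ w, TensorProduct.lid R N (I.subtype.rTensor N w) = s := by
    refine Submodule.smul_induction_on hs (fun r hr n _ => ⟨⟨r, hr⟩ ⊗ₜ n, by simp⟩) ?_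
    rintro _ _ ⟨a, rfl⟩ ⟨b, rfl⟩
    exact ⟨a + b, by simp only [map_add]⟩
  have hmem' (w : I ⊗[R] N) :
      TensorProduct.lid R N (I.subtype.rTensor N w) ∈ I • (⊤ : Submodule R N) := by
    induction w with
    | zero => simp
    | add a b ha hb => simpa only [map_add] using add_mem ha hb
    | tmul a b =>
      rw [LinearMap.rTensor_tmul, TensorProduct.lid_tmul]
      exact Submodule.smul_mem_smul a.2 trivial
  have hlid (x : R ⊗[R] N) :
      TensorProduct.lid R N' (π.lTensor R x) = π (TensorProduct.lid R N x) := by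
    induction x with
    | zero => simp
    | add a b ha hb => simp only [map_add, ha, hb]
    | tmul a b => simp
  have hlid' (x : R ⊗[R] N) :
      TensorProduct.lid R N (φ.lTensor R x) = φ (TensorProduct.lid R N x) := by
    induction x with
    | zero => simp
    | add a b ha hb => simp only [map_add, ha, hb]
    | tmul a b => simp
  rw [injective_iff_map_eq_zero]
  intro u hu
  obtain ⟨u, rfl⟩ := LinearMap.lTensor_surjective I hπ u
  rw [← LinearMap.comp_apply, LinearMap.rTensor_comp_lTensor, ← LinearMap.lTensor_comp_rTensor,
    LinearMap.comp_apply] at hu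
  have h0 : π (TensorProduct.lid R N (I.subtype.rTensor N u)) = 0 := by rw [← hlid, hu, map_zero]
  obtain ⟨s, hs⟩ := (hexact _).mp h0
  obtain ⟨w, rfl⟩ := hmem s (hφ I s (hs ▸ hmem' u))
  have huw : u = φ.lTensor I w := by
    apply hsub
    apply (TensorProduct.lid R N).injective
    rw [← hs, ← hlid', ← LinearMap.comp_apply, ← LinearMap.comp_apply,
      LinearMap.lTensor_comp_rTensor, LinearMap.rTensor_comp_lTensor]
  rw [huw, ← LinearMap.comp_apply, ← LinearMap.lTensor_comp, hexact.linearMap_comp_eq_zero]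
  simp

open IsLocalRing in
/-- The cokernel of `y` on `N` is flat over the base if `y` is regular modulo the maximal ideal of
the base. -/
lemma flat_of_exact_lsmul {R S : Type*} [CommRing R] [IsLocalRing R] [CommRing S]
    [IsLocalRing S] [IsNoetherianRing S] [Algebra R S] [IsLocalHom (algebraMap R S)]
    {N : Type*} [AddCommGroup N] [Module R N] [Module S N] [IsScalarTower R S N]
    [Module.Finite S N] [Module.Flat R N] {y : S}
    {N' : Type*} [AddCommGroup N'] [Module R N'] [Module S N'] [IsScalarTower R S N']
    (π : N →ₗ[S] N') (hπ : Function.Surjective π)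
    (hexact : Function.Exact (LinearMap.lsmul S N y) π)
    (hy : ∀ z : N, y • z ∈ maximalIdeal R • (⊤ : Submodule R N) →
      z ∈ maximalIdeal R • (⊤ : Submodule R N)) :
    Module.Flat R N' :=
  flat_of_exact_of_forall_mem_smul_top
    (φ := (LinearMap.lsmul S N y).restrictScalars R) (π := π.restrictScalars R)
    hπ hexact (mem_ideal_smul_top_of_smul_mem hy)

open IsLocalRing in
lemma flat_quotSMulTop {R S : Type*} [CommRing R] [IsLocalRing R] [CommRing S]
    [IsLocalRing S] [IsNoetherianRing S] [Algebra R S] [IsLocalHom (algebraMap R S)]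
    {N : Type*} [AddCommGroup N] [Module R N] [Module S N] [IsScalarTower R S N]
    [Module.Finite S N] [Module.Flat R N] {y : S}
    (hy : ∀ z : N, y • z ∈ maximalIdeal R • (⊤ : Submodule R N) →
      z ∈ maximalIdeal R • (⊤ : Submodule R N)) :
    Module.Flat R (QuotSMulTop y N) := by
  have hexact : Function.Exact (LinearMap.lsmul S N y)
      (Submodule.mkQ _ : N →ₗ[S] QuotSMulTop y N) := fun x => by
    rw [Submodule.mkQ_apply, Submodule.Quotient.mk_eq_zero,
      Submodule.mem_smul_pointwise_iff_exists]
    simp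
  exact flat_of_exact_lsmul (y := y) (Submodule.mkQ _ : N →ₗ[S] QuotSMulTop y N)
    (Submodule.mkQ_surjective _) hexact hy

open IsLocalRing RingTheory.Sequence in
/-- A sequence that is weakly regular on the closed fibre of a flat module is weakly regular on the
module, and the quotient by it is again flat. -/
lemma isWeaklyRegular_and_flat_of_fiber {R S : Type*} [CommRing R] [IsLocalRing R] [CommRing S]
    [IsLocalRing S] [IsNoetherianRing S] [Algebra R S] [IsLocalHom (algebraMap R S)]
    {N : Type*} [AddCommGroup N] [Module R N] [Module S N] [IsScalarTower R S N]
    [Module.Finite S N] [Module.Flat R N] (ys : List S)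
    (h : IsWeaklyRegular ((S ⧸ (maximalIdeal R).map (algebraMap R S)) ⊗[S] N) ys) :
    IsWeaklyRegular N ys ∧ Module.Flat R (N ⧸ (Ideal.ofList ys • ⊤ : Submodule S N)) := by
  induction ys generalizing N with
  | nil =>
    let e : (N ⧸ (Ideal.ofList ([] : List S) • ⊤ : Submodule S N)) ≃ₗ[S] N :=
      Submodule.quotEquivOfEqBot _ (by rw [Ideal.ofList_nil, Submodule.bot_smul])
    exact ⟨.nil S N, .of_linearEquiv (e.restrictScalars R)⟩
  | cons y ys ih =>
    rw [isWeaklyRegular_cons_iff] at h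
    have hy (z : N) (hz : y • z ∈ maximalIdeal R • (⊤ : Submodule R N)) :
        z ∈ maximalIdeal R • (⊤ : Submodule R N) := by
      have hiff (x : N) : x ∈ (maximalIdeal R).map (algebraMap R S) • (⊤ : Submodule S N) ↔
          x ∈ maximalIdeal R • (⊤ : Submodule R N) := by
        rw [← Submodule.restrictScalars_mem R, Ideal.smul_restrictScalars,
          Submodule.restrictScalars_top]
      rw [← hiff] at hz ⊢
      refine (lTensor_quotient_injective_iff _ (LinearMap.lsmul S N y)).mp ?_ z hz
      have : (LinearMap.lsmul S N y).lTensor (S ⧸ (maximalIdeal R).map (algebraMap R S)) =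
          LinearMap.lsmul S _ y := by
        ext; simp
      rw [this]
      exact h.1
    have hflat := flat_quotSMulTop hy
    obtain ⟨h1, h2⟩ := ih (N := QuotSMulTop y N)
      ((QuotSMulTop.tensorQuotSMulTopEquivQuotSMulTop y _ N).isWeaklyRegular_congr ys |>.mpr h.2)
    have hreg : IsSMulRegular N y := by
      rw [isSMulRegular_iff_right_eq_zero_of_smul]
      intro z hz
      simpa using mem_ideal_smul_top_of_smul_mem hy ⊥ z (by simp [hz])
    let e := Submodule.quotOfListConsSMulTopEquivQuotSMulTopInner N y ys
    exact ⟨(isWeaklyRegular_cons_iff N y ys).mpr ⟨hreg, h1⟩, .of_linearEquiv (e.restrictScalars R)⟩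

open IsLocalRing RingTheory.Sequence in
/-- Concatenating a regular sequence on the closed fibre of a flat local homomorphism with one from
the base gives a regular sequence. -/
lemma isRegular_append_map_algebraMap {R S : Type*} [CommRing R] [IsLocalRing R] [CommRing S]
    [IsLocalRing S] [IsNoetherianRing S] [Algebra R S] [IsLocalHom (algebraMap R S)]
    [Module.Flat R S] {rs : List R} (hrs : ∀ r ∈ rs, r ∈ maximalIdeal R)
    (hR : IsWeaklyRegular R rs) {ys : List S} (hys : ∀ y ∈ ys, y ∈ maximalIdeal S)
    (hF : IsWeaklyRegular (S ⧸ (maximalIdeal R).map (algebraMap R S)) ys) :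
    IsRegular S (ys ++ rs.map (algebraMap R S)) := by
  obtain ⟨h1, h2⟩ := isWeaklyRegular_and_flat_of_fiber (R := R) (N := S) ys
    ((TensorProduct.rid S _).isWeaklyRegular_congr ys |>.mpr hF)
  refine .of_isWeaklyRegular_of_mem_maximalIdeal _ ?_
    ((isWeaklyRegular_append_iff _ _ _).mpr ⟨h1, ?_⟩)
  · intro r hr
    rcases List.mem_append.mp hr with hr | hr
    · exact hys r hr
    · obtain ⟨t, ht, rfl⟩ := List.mem_map.mp hr
      exact map_nonunit (algebraMap R S) t (hrs t ht)
  · rw [isWeaklyRegular_map_algebraMap_iff]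
    exact ((TensorProduct.lid R _).isWeaklyRegular_congr rs).mp
      hR.isWeaklyRegular_rTensor

lemma length_le_localDepth {R : Type*} [CommRing R] [IsLocalRing R] {M : Type*} [AddCommGroup M]
    [Module R M] {rs : List R} (hrs : ∀ r ∈ rs, r ∈ IsLocalRing.maximalIdeal R)
    (h : RingTheory.Sequence.IsRegular M rs) : (rs.length : ℕ∞) ≤ localDepth R M :=
  le_sSup ⟨rs, rfl, hrs, h⟩

lemma localDepth_le_iff {R : Type*} [CommRing R] [IsLocalRing R] {M : Type*} [AddCommGroup M]
    [Module R M] {n : ℕ∞} : localDepth R M ≤ n ↔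
      ∀ rs : List R, (∀ r ∈ rs, r ∈ IsLocalRing.maximalIdeal R) →
        RingTheory.Sequence.IsRegular M rs → (rs.length : ℕ∞) ≤ n := by
  simp only [localDepth, idealDepth, sSup_le_iff, Set.mem_ofPred_eq]
  exact ⟨fun h rs h1 h2 => h _ ⟨rs, rfl, h1, h2⟩, by rintro h _ ⟨rs, rfl, h1, h2⟩; exact h rs h1 h2⟩

lemma localDepth_le_of_ringEquiv {R : Type*} {S : Type*} [CommRing R] [CommRing S]
    [IsLocalRing R] [IsLocalRing S] {M N : Type*} [AddCommGroup M] [Module R M] [AddCommGroup N]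
    [Module S N] (e : R ≃+* S) (f : M ≃+ N) (h : ∀ (r : R) (x : M), f (r • x) = e r • f x) :
    localDepth R M ≤ localDepth S N := by
  rw [localDepth_le_iff]
  intro rs h1 h2
  rw [f.isRegular_congr (bs := rs.map e) (List.forall₂_map_right_iff.mpr
    (List.forall₂_same.mpr fun r _ x => h r x))] at h2
  rw [← List.length_map e]
  refine length_le_localDepth (fun s hs => ?_) h2
  obtain ⟨r, hr, rfl⟩ := List.mem_map.mp hs
  exact map_nonunit (e : R →+* S) r (h1 r hr)

lemma localDepth_eq_of_ringEquiv {R : Type*} {S : Type*} [CommRing R] [CommRing S]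
    [IsLocalRing R] [IsLocalRing S] (e : R ≃+* S) :
    localDepth R R = localDepth S S :=
  le_antisymm (localDepth_le_of_ringEquiv e e.toAddEquiv (by simp))
    (localDepth_le_of_ringEquiv e.symm e.symm.toAddEquiv (by simp))

open IsLocalRing in
/-- The depth of the source of a flat local homomorphism and the depth of its closed fibre add up to
at most the depth of the target. -/
lemma localDepth_add_le_of_flat {R S F : Type*} [CommRing R] [IsLocalRing R] [CommRing S]
    [IsLocalRing S] [IsNoetherianRing S] [Algebra R S] [IsLocalHom (algebraMap R S)]
    [Module.Flat R S] [CommRing F] [IsLocalRing F] (g : S →+* F) (hg : Function.Surjective g)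
    (hker : RingHom.ker g = (maximalIdeal R).map (algebraMap R S)) :
    localDepth R R + localDepth F F ≤ localDepth S S := by
  have key (rs : List R) (hrs : ∀ r ∈ rs, r ∈ maximalIdeal R)
      (hR : RingTheory.Sequence.IsRegular R rs) (ys : List F)
      (hys : ∀ y ∈ ys, y ∈ maximalIdeal F) (hF : RingTheory.Sequence.IsRegular F ys) :
      (rs.length : ℕ∞) + ys.length ≤ localDepth S S := by
    obtain ⟨ys, rfl⟩ := List.map_surjective_iff.mpr hg ys
    have hys' : ∀ y ∈ ys, y ∈ maximalIdeal S := fun y hy hu =>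
      hys (g y) (List.mem_map_of_mem hy) (hu.map g)
    let f : (S ⧸ (maximalIdeal R).map (algebraMap R S)) ≃+ F :=
      ((Ideal.quotEquivOfEq hker.symm).trans
        (RingHom.quotientKerEquivOfSurjective hg)).toAddEquiv
    have hw : RingTheory.Sequence.IsWeaklyRegular
        (S ⧸ (maximalIdeal R).map (algebraMap R S)) ys := by
      refine (f.isWeaklyRegular_congr (bs := ys.map g) (List.forall₂_map_right_iff.mpr
        (List.forall₂_same.mpr fun r _ x => ?_))).mpr hF.1
      obtain ⟨x, rfl⟩ := Ideal.Quotient.mk_surjective x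
      exact map_mul g r x
    have hreg := isRegular_append_map_algebraMap hrs hR.1 hys' hw
    refine le_trans (le_of_eq ?_) (length_le_localDepth ?_ hreg)
    · simp [add_comm]
    · intro s hs
      rcases List.mem_append.mp hs with hs | hs
      · exact hys' s hs
      · obtain ⟨r, hr, rfl⟩ := List.mem_map.mp hs
        exact map_nonunit (algebraMap R S) r (hrs r hr)
  rw [localDepth, localDepth, idealDepth, idealDepth, sSup_eq_iSup, sSup_eq_iSup]
  refine ENat.biSup_add_biSup_le ?_ ?_ ?_
  · exact ⟨0, [], by simp, by simp, .nil R R⟩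
  · exact ⟨0, [], by simp, by simp, .nil F F⟩
  · rintro _ ⟨rs, rfl, h1, h2⟩ _ ⟨ys, rfl, h3, h4⟩
    exact key rs h1 h2 ys h3 h4

/-- The depth of the local ring of `R` at a prime `p`. -/
noncomputable def primeDepth {R : Type*} [CommRing R] (p : Ideal R) [p.IsPrime] : ℕ∞ :=
  localDepth (Localization.AtPrime p) (Localization.AtPrime p)

lemma ker_localRingHom {S T : Type*} [CommRing S] [CommRing T] {f : S →+* T}
    (hf : Function.Surjective f) {Q : Ideal S} [Q.IsPrime] {q : Ideal T} [q.IsPrime]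
    (hq : Q = q.comap f) :
    RingHom.ker (Localization.localRingHom Q q f hq) =
      (RingHom.ker f).map (algebraMap S (Localization.AtPrime Q)) := by
  apply le_antisymm
  · intro x hx
    obtain ⟨s, t, rfl⟩ := IsLocalization.exists_mk'_eq Q.primeCompl x
    rw [RingHom.mem_ker, Localization.localRingHom_mk', IsLocalization.mk'_eq_zero_iff] at hx
    obtain ⟨⟨c, hc⟩, hcs⟩ := hx
    obtain ⟨c, rfl⟩ := hf c
    rw [IsLocalization.mk'_mem_map_algebraMap_iff]
    refine ⟨c, fun h => hc ?_, ?_⟩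
    · rwa [hq] at h
    · rw [RingHom.mem_ker, map_mul]
      exact hcs
  · rw [Ideal.map_le_iff_le_comap]
    intro x hx
    rw [Ideal.mem_comap, RingHom.mem_ker, Localization.localRingHom_to_map,
      (RingHom.mem_ker).mp hx, map_zero]

lemma localRingHom_surjective_of_surjective {S T : Type*} [CommRing S] [CommRing T] {f : S →+* T}
    (hf : Function.Surjective f) {Q : Ideal S} [Q.IsPrime] {q : Ideal T} [q.IsPrime]
    (hq : Q = q.comap f) :
    Function.Surjective (Localization.localRingHom Q q f hq) := by
  intro x
  obtain ⟨s, ⟨t, ht⟩, rfl⟩ := IsLocalization.exists_mk'_eq q.primeCompl x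
  obtain ⟨s, rfl⟩ := hf s
  obtain ⟨t, rfl⟩ := hf t
  refine ⟨IsLocalization.mk' _ s (⟨t, fun h => ht ?_⟩ : Q.primeCompl), ?_⟩
  · rwa [hq] at h
  · rw [Localization.localRingHom_mk']

open IsLocalRing in
/-- Depth is superadditive along flat ring homomorphisms: the depth of the base and of the fibre add
up to at most the depth of the total space. -/
lemma primeDepth_add_le_of_flat {R S T : Type*} [CommRing R] [CommRing S] [CommRing T]
    [IsNoetherianRing S] {φ : R →+* S} (hφ : φ.Flat) {f : S →+* T} (hf : Function.Surjective f)
    (p : Ideal R) [p.IsPrime] (Q : Ideal S) [Q.IsPrime] (q : Ideal T) [q.IsPrime]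
    (hp : p = Q.comap φ) (hq : Q = q.comap f) (hker : RingHom.ker f = p.map φ) :
    primeDepth p + primeDepth q ≤ primeDepth Q := by
  algebraize [Localization.localRingHom p Q φ hp]
  have : IsLocalHom (algebraMap (Localization.AtPrime p) (Localization.AtPrime Q)) :=
    Localization.isLocalHom_localRingHom p Q φ hp
  have : Module.Flat (Localization.AtPrime p) (Localization.AtPrime Q) :=
    RingHom.Flat.localRingHom hφ Q p hp
  refine localDepth_add_le_of_flat (Localization.localRingHom Q q f hq)
    (localRingHom_surjective_of_surjective hf hq) ?_
  rw [ker_localRingHom hf hq, hker, ← Localization.AtPrime.map_eq_maximalIdeal, Ideal.map_map,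
    Ideal.map_map]
  congr 1
  ext x
  exact (Localization.localRingHom_to_map p Q φ hp x).symm

lemma height_le_add_of_ker_eq {R S T : Type*} [CommRing R] [CommRing S] [CommRing T]
    [IsNoetherianRing R] [IsNoetherianRing S] {φ : R →+* S} {f : S →+* T}
    (hf : Function.Surjective f) (p : Ideal R) [p.IsPrime] (Q : Ideal S) [Q.IsPrime]
    (q : Ideal T) (hp : p = Q.comap φ) (hq : Q = q.comap f) (hker : RingHom.ker f = p.map φ) :
    Q.height ≤ p.height + q.height := by
  algebraize [φ]
  have : Q.LiesOver p := ⟨hp⟩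
  refine (Ideal.height_le_height_add_of_liesOver p Q).trans (le_of_eq ?_)
  congr 1
  let e : (S ⧸ p.map (algebraMap R S)) ≃+* T :=
    (Ideal.quotEquivOfEq hker.symm).trans (RingHom.quotientKerEquivOfSurjective hf)
  rw [← RingEquiv.height_comap e q]
  congr 1
  rw [hq, ← Ideal.map_comap_of_surjective
    (Ideal.Quotient.mk (p.map (algebraMap R S))) Ideal.Quotient.mk_surjective (q.comap e)]
  rfl

lemma primeDepth_eq_of_ringEquiv {R S : Type*} [CommRing R] [CommRing S] (e : R ≃+* S)
    (p : Ideal R) [p.IsPrime] (q : Ideal S) [q.IsPrime] (h : p = q.comap (e : R →+* S)) :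
    primeDepth p = primeDepth q := by
  refine localDepth_eq_of_ringEquiv (RingEquiv.ofBijective (Localization.localRingHom p q e h)
    ⟨?_, localRingHom_surjective_of_surjective e.surjective h⟩)
  rw [RingHom.injective_iff_ker_eq_bot, ker_localRingHom e.surjective h,
    (RingHom.injective_iff_ker_eq_bot (e : R →+* S)).mp e.injective, Ideal.map_bot]

lemma primeDepth_comap_of_isLocalization {R S : Type*} [CommRing R] [CommRing S] [Algebra R S]
    (M : Submonoid R) [IsLocalization M S] (q : Ideal S) [q.IsPrime] :
    primeDepth (q.comap (algebraMap R S)) = primeDepth q := by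
  have := IsLocalization.isLocalization_isLocalization_atPrime_isLocalization M
    (Localization.AtPrime q) q
  exact localDepth_eq_of_ringEquiv (IsLocalization.algEquiv (q.comap (algebraMap R S)).primeCompl
    (Localization.AtPrime (q.comap (algebraMap R S))) (Localization.AtPrime q)).toRingEquiv

/-- All local rings of `R` have depth at least their dimension. -/
def HeightLEDepth (R : Type*) [CommRing R] : Prop :=
  ∀ (p : Ideal R) [p.IsPrime], p.height ≤ primeDepth p

lemma HeightLEDepth.of_ringEquiv {R S : Type*} [CommRing R] [CommRing S] (e : R ≃+* S)
    (h : HeightLEDepth R) : HeightLEDepth S := by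
  intro q _
  rw [← primeDepth_eq_of_ringEquiv e (q.comap (e : R →+* S)) q rfl, ← RingEquiv.height_comap e q]
  exact h _

/-- If the base has depth at least its dimension at `p`, and so does the fibre at `q`, then the same
holds upstairs. -/
lemma height_le_primeDepth_of_flat {R S T : Type*} [CommRing R] [CommRing S] [CommRing T]
    [IsNoetherianRing R] [IsNoetherianRing S] {φ : R →+* S} (hφ : φ.Flat) {f : S →+* T}
    (hf : Function.Surjective f) (p : Ideal R) [p.IsPrime] (Q : Ideal S) [Q.IsPrime] (q : Ideal T)
    [q.IsPrime] (hp : p = Q.comap φ) (hq : Q = q.comap f) (hker : RingHom.ker f = p.map φ)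
    (h1 : p.height ≤ primeDepth p) (h2 : q.height ≤ primeDepth q) :
    Q.height ≤ primeDepth Q :=
  (height_le_add_of_ker_eq hf p Q q hp hq hker).trans
    ((add_le_add h1 h2).trans (primeDepth_add_le_of_flat hφ hf p Q q hp hq hker))

lemma one_le_primeDepth {R : Type*} [CommRing R] [IsDomain R] (p : Ideal R) [p.IsPrime]
    (hp : p ≠ ⊥) : 1 ≤ primeDepth p := by
  obtain ⟨x, hx, hx0⟩ := Submodule.exists_mem_ne_zero_of_ne_bot hp
  let y := algebraMap R (Localization.AtPrime p) x
  have hy : y ∈ IsLocalRing.maximalIdeal (Localization.AtPrime p) :=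
    (IsLocalization.AtPrime.to_map_mem_maximal_iff _ p x).mpr hx
  have hy0 : y ≠ 0 := by
    rwa [Ne, FaithfulSMul.algebraMap_eq_zero_iff]
  have hreg : RingTheory.Sequence.IsRegular (Localization.AtPrime p) [y] := by
    have := IsLocalization.isDomain_localization p.primeCompl_le_nonZeroDivisors
    refine ⟨?_, ?_⟩
    · rw [RingTheory.Sequence.isWeaklyRegular_singleton_iff]
      exact IsLeftRegular.isSMulRegular (IsLeftCancelMulZero.mul_left_cancel_of_ne_zero hy0)
    · rw [Ideal.ofList_singleton, smul_eq_mul, Ideal.mul_top, Ne, eq_comm,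
        Ideal.span_singleton_eq_top]
      exact hy
  simpa using! length_le_localDepth (by simpa using hy) hreg

open Polynomial in
lemma height_le_one_of_comap_C_eq_bot {D : Type*} [CommRing D] [IsDomain D] (q : Ideal D[X])
    [q.IsPrime] (hq : q.comap C = ⊥) : q.height ≤ 1 := by
  let F := FractionRing D
  let : Algebra D[X] F[X] := Polynomial.algebra D F
  have : IsLocalization ((nonZeroDivisors D).map C) F[X] := Polynomial.isLocalization _ _
  have hdisj : Disjoint ((nonZeroDivisors D).map C : Set D[X]) (q : Set D[X]) := by
    rw [Set.disjoint_left]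
    rintro _ ⟨d, hd, rfl⟩ hdq
    have : d ∈ q.comap C := hdq
    rw [hq, Ideal.mem_bot] at this
    exact nonZeroDivisors.ne_zero hd this
  rw [← IsLocalization.height_map_of_disjoint (S := F[X]) _ q hdisj]
  have := IsLocalization.isPrime_of_isPrime_disjoint _ F[X] q ‹_› hdisj
  exact Ideal.height_le_one_of_isPrincipal_of_mem_minimalPrimes (q.map (algebraMap D[X] F[X])) _
    (by rw [Ideal.minimalPrimes_eq_subsingleton_self]; rfl)

open Polynomial in
lemma HeightLEDepth.polynomial {R : Type*} [CommRing R] [IsNoetherianRing R]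
    (h : HeightLEDepth R) : HeightLEDepth R[X] := by
  intro Q _
  let p := Q.comap (C : R →+* R[X])
  let f : R[X] →+* (R ⧸ p)[X] := mapRingHom (Ideal.Quotient.mk p)
  have hf : Function.Surjective f := map_surjective _ Ideal.Quotient.mk_surjective
  have hker : RingHom.ker f = p.map C := by rw [ker_mapRingHom, Ideal.mk_ker]
  have hle : RingHom.ker f ≤ Q := hker ▸ Ideal.map_comap_le
  have : (Q.map f).IsPrime := Ideal.map_isPrime_of_surjective hf hle
  have hQ : Q = (Q.map f).comap f := by
    rw [Ideal.comap_map_of_surjective' f hf, sup_eq_left.mpr hle]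
  refine height_le_primeDepth_of_flat (φ := C) ?_ hf p Q (Q.map f) rfl hQ hker (h p) ?_
  · exact RingHom.flat_algebraMap_iff.mpr inferInstance
  · have hbot : (Q.map f).comap C = ⊥ := by
      rw [eq_bot_iff]
      intro x hx
      obtain ⟨x, rfl⟩ := Ideal.Quotient.mk_surjective x
      rw [Ideal.mem_bot, Ideal.Quotient.eq_zero_iff_mem]
      change C x ∈ Q
      rw [hQ]
      simpa [f] using hx
    by_cases h0 : Q.map f = ⊥
    · simp [h0, Ideal.height_bot]
    · exact (height_le_one_of_comap_C_eq_bot _ hbot).trans (one_le_primeDepth _ h0)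

lemma HeightLEDepth.mvPolynomial {R : Type*} [CommRing R] [IsNoetherianRing R]
    (h : HeightLEDepth R) (σ : Type*) [Finite σ] : HeightLEDepth (MvPolynomial σ R) := by
  induction σ using Finite.induction_empty_option with
  | of_equiv e H => exact H.of_ringEquiv (MvPolynomial.renameEquiv R e).toRingEquiv
  | h_empty => exact h.of_ringEquiv (MvPolynomial.isEmptyRingEquiv R _).symm
  | h_option H =>
    exact H.polynomial.of_ringEquiv (MvPolynomial.optionEquivLeft R _).symm.toRingEquiv

lemma HeightLEDepth.of_field (k : Type*) [Field k] : HeightLEDepth k := by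
  intro p hp
  simp [(eq_bot_or_eq_top p).resolve_right hp.ne_top, Ideal.height_bot]

lemma flat_of_injective_of_isDomain {D L : Type*} [CommRing D] [IsDomain D] [Field L]
    (φ : D →+* L) (hφ : Function.Injective φ) : φ.Flat := by
  algebraize [φ]
  have : FaithfulSMul D L := (faithfulSMul_iff_algebraMap_injective D L).mpr hφ
  let := FractionRing.liftAlgebra D L
  have := FractionRing.isScalarTower_liftAlgebra D L
  exact Module.Flat.trans D (FractionRing D) L

lemma height_map_mk_eq_zero {R : Type*} [CommRing R] {J Q : Ideal R} [Q.IsPrime] (hJ : J ≤ Q)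
    (hmin : ∀ (Q' : Ideal R) [Q'.IsPrime], J ≤ Q' → Q' ≤ Q → Q ≤ Q') :
    (Q.map (Ideal.Quotient.mk J)).height = 0 := by
  have hprime : (Q.map (Ideal.Quotient.mk J)).IsPrime :=
    Ideal.map_isPrime_of_surjective Ideal.Quotient.mk_surjective (by rwa [Ideal.mk_ker])
  rw [Ideal.height_eq_zero_iff]
  refine ⟨⟨hprime, bot_le⟩, ?_⟩
  rintro q ⟨hq, -⟩ hle
  rw [Ideal.map_le_iff_le_comap]
  have := hq.comap (Ideal.Quotient.mk J)
  refine hmin (q.comap (Ideal.Quotient.mk J)) ?_ ?_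
  · intro x hx
    rw [Ideal.mem_comap, Ideal.Quotient.eq_zero_iff_mem.mpr hx]
    exact q.zero_mem
  · refine (Ideal.comap_mono hle).trans (le_of_eq ?_)
    rw [Ideal.comap_map_of_surjective' _ Ideal.Quotient.mk_surjective, Ideal.mk_ker,
      sup_eq_left.mpr hJ]

lemma isIntegral_tensorProduct_map_id {k K E L : Type*} [Field k] [CommRing K] [Algebra k K]
    [CommRing E] [Algebra k E] [CommRing L] [Algebra k L] (ι : E →ₐ[k] L)
    (hι : (ι : E →+* L).IsIntegral) :
    (Algebra.TensorProduct.map (.id k K) ι : K ⊗[k] E →ₐ[k] K ⊗[k] L).toRingHom.IsIntegral := by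
  intro w
  induction w with
  | zero => exact RingHom.isIntegralElem_zero _
  | add a b ha hb => exact ha.add _ hb
  | tmul a l =>
    have h1 : (a ⊗ₜ[k] l : K ⊗[k] L) = (a ⊗ₜ 1) * (1 ⊗ₜ l) := by simp
    rw [h1]
    refine RingHom.IsIntegralElem.mul _ ?_ ?_
    · have h2 : (a ⊗ₜ[k] (1 : L) : K ⊗[k] L) =
          (Algebra.TensorProduct.map (.id k K) ι).toRingHom (a ⊗ₜ 1) := by simp
      rw [h2]
      exact RingHom.isIntegralElem_map _
    · obtain ⟨p, hp, hp0⟩ := hι l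
      refine ⟨p.map (Algebra.TensorProduct.includeRight : E →ₐ[k] K ⊗[k] E).toRingHom,
        hp.map _, ?_⟩
      have h3 : (Algebra.TensorProduct.map (.id k K) ι).toRingHom.comp
          (Algebra.TensorProduct.includeRight : E →ₐ[k] K ⊗[k] E).toRingHom =
          (Algebra.TensorProduct.includeRight : L →ₐ[k] K ⊗[k] L).toRingHom.comp ι := by
        ext; simp
      rw [Polynomial.eval₂_map, h3]
      have := Polynomial.hom_eval₂ p (ι : E →+* L)
        (Algebra.TensorProduct.includeRight : L →ₐ[k] K ⊗[k] L).toRingHom l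
      rw [hp0, map_zero] at this
      exact this.symm

/-- The map `K ⊗ k[Xᵢ, i ∈ s] → K ⊗ L` evaluating the variables at a family `x` in `L`. -/
noncomputable def tensorAeval (k K : Type*) {L ι : Type*} [Field k] [CommRing K]
    [Algebra k K] [CommRing L] [Algebra k L] (x : ι → L) (s : Finset ι) :
    K ⊗[k] MvPolynomial s k →ₐ[k] K ⊗[k] L :=
  Algebra.TensorProduct.map (.id k K) (MvPolynomial.aeval fun i : s => x i)

lemma tensorAeval_tmul {k K L ι : Type*} [Field k] [CommRing K] [Algebra k K] [CommRing L]
    [Algebra k L] (x : ι → L) (s : Finset ι) (a : K) (d : MvPolynomial s k) :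
    tensorAeval k K x s (a ⊗ₜ d) = a ⊗ₜ MvPolynomial.aeval (fun i : s => x i) d := by
  simp [tensorAeval]

lemma exists_tensorAeval_eq_of_subset {k K L ι : Type*} [Field k] [CommRing K] [Algebra k K]
    [CommRing L] [Algebra k L] (x : ι → L) {s t : Finset ι} (h : s ⊆ t)
    (v : K ⊗[k] MvPolynomial s k) :
    ∃ w, tensorAeval k K x t w = tensorAeval k K x s v := by
  have hext : (MvPolynomial.aeval (fun i : t => x i)).comp
      (MvPolynomial.rename fun i : s => (⟨i, h i.2⟩ : t)) =
      MvPolynomial.aeval (R := k) fun i : s => x i := by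
    ext; simp
  refine ⟨Algebra.TensorProduct.map (.id k K)
    (MvPolynomial.rename fun i : s => (⟨i, h i.2⟩ : t)) v, ?_⟩
  rw [tensorAeval, tensorAeval, ← hext]
  nth_rw 3 [← AlgHom.comp_id (AlgHom.id k K)]
  rw [Algebra.TensorProduct.map_comp]
  rfl

/-- Clearing denominators: every element of `K ⊗ k(x)` is, up to a unit, the image of an element of
`K ⊗ k[Xᵢ, i ∈ s]` for some finite `s`. -/
lemma exists_isUnit_mul_eq_tensorAeval {k K L ι : Type*} [Field k] [CommRing K] [Algebra k K]
    [Field L] [Algebra k L] (x : ι → L)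
    (u : K ⊗[k] IntermediateField.adjoin k (Set.range x)) :
    ∃ (s : Finset ι) (d v : K ⊗[k] MvPolynomial s k), IsUnit (tensorAeval k K x s d) ∧
      tensorAeval k K x s v = tensorAeval k K x s d *
        Algebra.TensorProduct.map (.id k K) (IntermediateField.adjoin k (Set.range x)).val u := by
  classical
  induction u with
  | zero => exact ⟨∅, 1, 0, by simp, by simp⟩
  | tmul a b =>
    obtain ⟨b, hb⟩ := b
    obtain ⟨r, s, hrs⟩ := (IntermediateField.mem_adjoin_range_iff k x b).mp hb
    by_cases hs : MvPolynomial.aeval x s = 0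
    · refine ⟨∅, 1, 0, by simp, ?_⟩
      have : b = 0 := by rw [hrs, hs, div_zero]
      simp [this]
    · obtain ⟨t, r, s, rfl, rfl⟩ := MvPolynomial.exists_finset_rename₂ r s
      simp only [MvPolynomial.aeval_rename] at hs hrs
      refine ⟨t, 1 ⊗ₜ s, a ⊗ₜ r, ?_, ?_⟩
      · rw [tensorAeval_tmul]
        exact (IsUnit.mk0 _ hs).map (Algebra.TensorProduct.includeRight : L →ₐ[k] K ⊗[k] L)
      · rw [eq_div_iff hs] at hrs
        simp only [tensorAeval_tmul, Algebra.TensorProduct.map_tmul, AlgHom.coe_id, id_eq,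
          Algebra.TensorProduct.tmul_mul_tmul, one_mul, IntermediateField.coe_val]
        congr 1
        rw [mul_comm]
        exact hrs.symm
  | add u₁ u₂ h₁ h₂ =>
    obtain ⟨s₁, d₁, v₁, hd₁, hv₁⟩ := h₁
    obtain ⟨s₂, d₂, v₂, hd₂, hv₂⟩ := h₂
    have hs₁ : s₁ ⊆ s₁ ∪ s₂ := Finset.subset_union_left
    have hs₂ : s₂ ⊆ s₁ ∪ s₂ := Finset.subset_union_right
    obtain ⟨d₁, hd₁'⟩ := exists_tensorAeval_eq_of_subset x hs₁ d₁
    obtain ⟨v₁, hv₁'⟩ := exists_tensorAeval_eq_of_subset x hs₁ v₁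
    obtain ⟨d₂, hd₂'⟩ := exists_tensorAeval_eq_of_subset x hs₂ d₂
    obtain ⟨v₂, hv₂'⟩ := exists_tensorAeval_eq_of_subset x hs₂ v₂
    refine ⟨s₁ ∪ s₂, d₁ * d₂, d₂ * v₁ + d₁ * v₂, ?_, ?_⟩
    · rw [map_mul, hd₁', hd₂']
      exact hd₁.mul hd₂
    · simp only [map_add, map_mul, hd₁', hd₂', hv₁', hv₂', hv₁, hv₂]
      ring

/-- The local rings of a noetherian tensor product of two fields have depth at least their
dimension. -/
lemma heightLEDepth_tensorProduct_field (k K L : Type*) [Field k] [Field K] [Field L]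
    [Algebra k K] [Algebra k L] [IsNoetherianRing (K ⊗[k] L)] : HeightLEDepth (K ⊗[k] L) := by
  classical
  intro Q _
  obtain ⟨ι, x, hx⟩ := exists_isTranscendenceBasis' k L
  let p (s : Finset ι) : Ideal (K ⊗[k] MvPolynomial s k) :=
    Q.comap (tensorAeval k K x s).toRingHom
  let J (s : Finset ι) : Ideal (K ⊗[k] L) := (p s).map (tensorAeval k K x s).toRingHom
  have hJQ (s : Finset ι) : J s ≤ Q := Ideal.map_comap_le
  have hmono {s t : Finset ι} (h : s ⊆ t) : J s ≤ J t := by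
    refine Ideal.map_le_iff_le_comap.mpr fun v hv => ?_
    obtain ⟨w, hw⟩ := exists_tensorAeval_eq_of_subset x h v
    have hwp : w ∈ p t := by
      change tensorAeval k K x t w ∈ Q
      rw [hw]
      exact hv
    change tensorAeval k K x s v ∈ J t
    rw [← hw]
    exact Ideal.mem_map_of_mem (tensorAeval k K x t).toRingHom hwp
  obtain ⟨_, ⟨s, rfl⟩, hs⟩ := (wellFounded_gt (α := Ideal (K ⊗[k] L))).has_min (Set.range J)
    (Set.range_nonempty J)
  have hmax (t : Finset ι) : J t ≤ J s := by
    have h1 : J s ≤ J (s ∪ t) := hmono Finset.subset_union_left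
    have h2 : J t ≤ J (s ∪ t) := hmono Finset.subset_union_right
    by_contra hlt
    exact hs (J (s ∪ t)) ⟨_, rfl⟩ (lt_of_le_not_ge h1 fun h => hlt (h2.trans h))
  have hflat : (tensorAeval k K x s).toRingHom.Flat :=
    RingHom.Flat.tensorProductMap (f := AlgHom.id k K) (RingHom.Flat.id K)
      (flat_of_injective_of_isDomain _ (hx.1.comp _ Subtype.val_injective))
  let e : MvPolynomial s K ≃+* K ⊗[k] MvPolynomial s k :=
    (MvPolynomial.algebraTensorAlgEquiv k K).symm.toRingEquiv
  have : IsNoetherianRing (K ⊗[k] MvPolynomial s k) := isNoetherianRing_of_ringEquiv _ e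
  have hCM : HeightLEDepth (K ⊗[k] MvPolynomial s k) :=
    ((HeightLEDepth.of_field K).mvPolynomial s).of_ringEquiv e
  have hprime : (Q.map (Ideal.Quotient.mk (J s))).IsPrime :=
    Ideal.map_isPrime_of_surjective Ideal.Quotient.mk_surjective (by rw [Ideal.mk_ker]; exact hJQ s)
  refine height_le_primeDepth_of_flat hflat (f := Ideal.Quotient.mk (J s))
    Ideal.Quotient.mk_surjective (p s) Q (Q.map (Ideal.Quotient.mk (J s))) rfl ?_
    (Ideal.mk_ker) (hCM (p s)) ?_
  · rw [Ideal.comap_map_of_surjective' _ Ideal.Quotient.mk_surjective, Ideal.mk_ker,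
      sup_eq_left.mpr (hJQ s)]
  · rw [height_map_mk_eq_zero (hJQ s)]
    · exact zero_le
    intro Q' _ hJ' hQ'
    by_contra hnle
    obtain ⟨w, hwQ, hwQ'⟩ := Set.not_subset.mp hnle
    have := hx.isAlgebraic_field
    algebraize [(Algebra.TensorProduct.map (.id k K)
      (IntermediateField.adjoin k (Set.range x)).val).toRingHom]
    have hint := isIntegral_tensorProduct_map_id (K := K)
      (IntermediateField.adjoin k (Set.range x)).val
      (fun l => Algebra.IsIntegral.isIntegral (R := IntermediateField.adjoin k (Set.range x)) l)
    have hlt := Ideal.comap_lt_comap_of_integral_mem_sdiff hQ' ⟨hwQ, hwQ'⟩ (hint w)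
    obtain ⟨u, huQ, huQ'⟩ := Set.exists_of_ssubset hlt
    obtain ⟨t, d, v, hd, hv⟩ := exists_isUnit_mul_eq_tensorAeval x u
    have hvp : v ∈ p t := by
      change tensorAeval k K x t v ∈ Q
      rw [hv]
      exact Q.mul_mem_left _ huQ
    have hvQ' : tensorAeval k K x t v ∈ Q' :=
      hJ' (hmax t (Ideal.mem_map_of_mem (tensorAeval k K x t).toRingHom hvp))
    rw [hv, Ideal.unit_mul_mem_iff_mem _ hd] at hvQ'
    exact huQ' hvQ'

lemma depthAt_self {R : Type*} [CommRing R] (P : PrimeSpectrum R) :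
    depthAt R R P = primeDepth P.asIdeal := by
  let e : LocalizedModule P.asIdeal.primeCompl R ≃ₗ[R] Localization.AtPrime P.asIdeal :=
    IsLocalizedModule.iso P.asIdeal.primeCompl
      (Algebra.linearMap R (Localization.AtPrime P.asIdeal))
  let e' := e.extendScalarsOfIsLocalization P.asIdeal.primeCompl (Localization.AtPrime P.asIdeal)
  exact le_antisymm
    (localDepth_le_of_ringEquiv (RingEquiv.refl _) e'.toAddEquiv fun r x => e'.map_smul r x)
    (localDepth_le_of_ringEquiv (RingEquiv.refl _) e'.symm.toAddEquiv
      fun r x => e'.symm.map_smul r x)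

lemma heightAt_self {R : Type*} [CommRing R] (P : PrimeSpectrum R) :
    heightAt R R P = P.asIdeal.height := by
  let e : LocalizedModule P.asIdeal.primeCompl R ≃ₗ[R] Localization.AtPrime P.asIdeal :=
    IsLocalizedModule.iso P.asIdeal.primeCompl
      (Algebra.linearMap R (Localization.AtPrime P.asIdeal))
  let e' := e.extendScalarsOfIsLocalization P.asIdeal.primeCompl (Localization.AtPrime P.asIdeal)
  change Module.supportDim _ _ = _
  rw [Module.supportDim_eq_of_equiv e', Module.supportDim_self_eq_ringKrullDim,
    IsLocalization.AtPrime.ringKrullDim_eq_height P.asIdeal]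

lemma mem_support_self {R : Type*} [CommRing R] (P : PrimeSpectrum R) : P ∈ Module.support R R := by
  rw [Module.mem_support_iff']
  exact ⟨1, fun r hr => by rw [smul_eq_mul, mul_one]; exact fun h => hr (h ▸ P.asIdeal.zero_mem)⟩

lemma ringSerreCondS_iff {R : Type*} [CommRing R] {n : ℕ} :
    RingSerreCondS R n ↔
      ∀ (p : Ideal R) [p.IsPrime], min (n : ℕ∞) p.height ≤ primeDepth p := by
  have key (P : PrimeSpectrum R) :
      min (n : WithBot ℕ∞) (heightAt R R P) ≤ (depthAt R R P : WithBot ℕ∞) ↔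
        min (n : ℕ∞) P.asIdeal.height ≤ primeDepth P.asIdeal := by
    rw [heightAt_self, depthAt_self]
    norm_cast
  refine ⟨fun h p hp => ?_, fun h P _ => (key P).mpr (h P.asIdeal)⟩
  exact (key ⟨p, hp⟩).mp (h ⟨p, hp⟩ (mem_support_self _))

lemma ringCondC_iff {R : Type*} [CommRing R] {n : ℕ} :
    RingCondC R n ↔
      ∀ (p : Ideal R) [p.IsPrime], min (n : ℕ∞) p.height ≤ primeDepth p + 1 := by
  have key (P : PrimeSpectrum R) :
      min (n : WithBot ℕ∞) (heightAt R R P) ≤ (depthAt R R P : WithBot ℕ∞) + 1 ↔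
        min (n : ℕ∞) P.asIdeal.height ≤ primeDepth P.asIdeal + 1 := by
    rw [heightAt_self, depthAt_self]
    norm_cast
  refine ⟨fun h p hp => ?_, fun h P _ => (key P).mpr (h P.asIdeal)⟩
  exact (key ⟨p, hp⟩).mp (h ⟨p, hp⟩ (mem_support_self _))

lemma height_le_primeDepth_of_isLocalization {R S : Type*} [CommRing R] [CommRing S] [Algebra R S]
    (M : Submonoid R) [IsLocalization M S] (q : Ideal R) [hq : q.IsPrime]
    (hM : Disjoint (M : Set R) q)
    (h : ∀ (q' : Ideal S) [q'.IsPrime], q'.comap (algebraMap R S) = q →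
      q'.height ≤ primeDepth q') : q.height ≤ primeDepth q := by
  have hprime := IsLocalization.isPrime_of_isPrime_disjoint M S q hq hM
  have hcomap := IsLocalization.under_map_of_isPrime_disjoint M S hq hM
  have hle := h (q.map (algebraMap R S)) hcomap
  rw [← primeDepth_comap_of_isLocalization M, ← IsLocalization.height_under M] at hle
  simp only [Ideal.under_def] at hle hcomap
  convert hle using 1
  · rw [hcomap]
  · congr 1
    exact hcomap.symm

/-- A prime of a noetherian tensor product of domains lying over the zero ideals has depth at least
its height. -/
lemma height_le_primeDepth_of_comap_eq_bot {k D E : Type*} (K L : Type*) [Field k] [CommRing D]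
    [IsDomain D] [CommRing E] [IsDomain E] [Algebra k D] [Algebra k E] [Field K] [Algebra D K]
    [IsFractionRing D K] [Algebra k K] [IsScalarTower k D K] [Field L] [Algebra E L]
    [IsFractionRing E L] [Algebra k L] [IsScalarTower k E L] [IsNoetherianRing (D ⊗[k] E)]
    (q : Ideal (D ⊗[k] E)) [q.IsPrime]
    (hD : q.comap (Algebra.TensorProduct.includeLeft : D →ₐ[k] D ⊗[k] E).toRingHom = ⊥)
    (hE : q.comap (Algebra.TensorProduct.includeRight : E →ₐ[k] D ⊗[k] E).toRingHom = ⊥) :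
    q.height ≤ primeDepth q := by
  let f : D ⊗[k] E →ₐ[k] K ⊗[k] E :=
    Algebra.TensorProduct.map (IsScalarTower.toAlgHom k D K) (.id k E)
  let g : K ⊗[k] E →ₐ[K] K ⊗[k] L :=
    Algebra.TensorProduct.map (.id K K) (IsScalarTower.toAlgHom k E L)
  let := f.toRingHom.toAlgebra
  let := g.toRingHom.toAlgebra
  have : IsScalarTower D (D ⊗[k] E) (K ⊗[k] E) := .of_algebraMap_eq fun x => by
    simp [RingHom.algebraMap_toAlgebra, f, Algebra.TensorProduct.algebraMap_apply]
  have : IsScalarTower K (K ⊗[k] E) (K ⊗[k] L) := .of_algebraMap_eq fun x => by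
    simp [RingHom.algebraMap_toAlgebra, g, Algebra.TensorProduct.algebraMap_apply]
  have hf := IsLocalization.tensorProduct_tensorProduct k E (nonZeroDivisors D) K (by
    ext x; simp [RingHom.algebraMap_toAlgebra, f])
  have hg := IsLocalization.tensorProduct_tensorProduct_right k K (nonZeroDivisors E) L (by
    ext x; simp [RingHom.algebraMap_toAlgebra, g])
  have hKE := IsLocalization.isNoetherianRing
    (Algebra.algebraMapSubmonoid (D ⊗[k] E) (nonZeroDivisors D)) (K ⊗[k] E) ‹_›
  have hKL := IsLocalization.isNoetherianRing
    ((nonZeroDivisors E).map (Algebra.TensorProduct.includeRight (R := k) (A := K))) (K ⊗[k] L) hKE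
  refine height_le_primeDepth_of_isLocalization (S := K ⊗[k] E)
    (Algebra.algebraMapSubmonoid (D ⊗[k] E) (nonZeroDivisors D)) q ?_ fun q' _ hq' => ?_
  · rw [Set.disjoint_left]
    rintro _ ⟨x, hx, rfl⟩ hxq
    have : x ∈ q.comap (Algebra.TensorProduct.includeLeft : D →ₐ[k] D ⊗[k] E).toRingHom := hxq
    rw [hD, Ideal.mem_bot] at this
    exact nonZeroDivisors.ne_zero hx this
  · refine height_le_primeDepth_of_isLocalization (S := K ⊗[k] L)
      ((nonZeroDivisors E).map (Algebra.TensorProduct.includeRight (R := k) (A := K))) q' ?_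
      fun q'' _ _ => heightLEDepth_tensorProduct_field k K L q''
    rw [Set.disjoint_left]
    rintro _ ⟨x, hx, rfl⟩ hxq
    have : x ∈ q.comap (Algebra.TensorProduct.includeRight : E →ₐ[k] D ⊗[k] E).toRingHom := by
      rw [← hq']
      change f (1 ⊗ₜ x) ∈ q'
      simpa [f] using hxq
    rw [hE, Ideal.mem_bot] at this
    exact nonZeroDivisors.ne_zero hx this

lemma flat_includeLeft (k A B : Type*) [Field k] [CommRing A] [CommRing B] [Algebra k A]
    [Algebra k B] : (Algebra.TensorProduct.includeLeft : A →ₐ[k] A ⊗[k] B).toRingHom.Flat :=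
  RingHom.flat_algebraMap_iff.mpr (inferInstanceAs (Module.Flat A (A ⊗[k] B)))

/-- For a prime `Q` of `A ⊗ B`, both the height and the depth are controlled by those of the
contractions to `A` and `B` together with the height of the induced prime of the generic fibre. -/
lemma exists_height_le_and_le_primeDepth {k A B : Type*} [Field k] [CommRing A] [CommRing B]
    [Algebra k A] [Algebra k B] [IsNoetherianRing A] [IsNoetherianRing B]
    [IsNoetherianRing (A ⊗[k] B)] (Q : Ideal (A ⊗[k] B)) [Q.IsPrime] :
    ∃ (p : Ideal A) (r : Ideal B) (_ : p.IsPrime) (_ : r.IsPrime) (d : ℕ∞),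
      Q.height ≤ p.height + (r.height + d) ∧
      primeDepth p + (primeDepth r + d) ≤ primeDepth Q := by
  let p := Q.comap (Algebra.TensorProduct.includeLeft : A →ₐ[k] A ⊗[k] B).toRingHom
  let r := Q.comap (Algebra.TensorProduct.includeRight : B →ₐ[k] A ⊗[k] B).toRingHom
  let f : A ⊗[k] B →ₐ[k] (A ⧸ p) ⊗[k] B :=
    Algebra.TensorProduct.map (Ideal.Quotient.mkₐ k p) (.id k B)
  let g : (A ⧸ p) ⊗[k] B →ₐ[k] (A ⧸ p) ⊗[k] (B ⧸ r) :=
    Algebra.TensorProduct.map (.id k (A ⧸ p)) (Ideal.Quotient.mkₐ k r)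
  have hf : Function.Surjective f.toRingHom :=
    TensorProduct.map_surjective (Ideal.Quotient.mkₐ_surjective k p) Function.surjective_id
  have hg : Function.Surjective g.toRingHom :=
    TensorProduct.map_surjective Function.surjective_id (Ideal.Quotient.mkₐ_surjective k r)
  have := isNoetherianRing_of_surjective _ _ _ hf
  have := isNoetherianRing_of_surjective _ _ _ hg
  have hkerf : RingHom.ker f.toRingHom =
      p.map (Algebra.TensorProduct.includeLeft : A →ₐ[k] A ⊗[k] B).toRingHom := by
    have := Algebra.TensorProduct.rTensor_ker (R := k) (S := k) (C := B) (B := A ⧸ p)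
      (Ideal.Quotient.mkₐ k p) (Ideal.Quotient.mkₐ_surjective k p)
    rwa [AlgHom.ker_coe, AlgHom.ker_coe, Ideal.Quotient.mkₐ_ker] at this
  have hkerg : RingHom.ker g.toRingHom =
      r.map (Algebra.TensorProduct.includeRight : B →ₐ[k] (A ⧸ p) ⊗[k] B).toRingHom := by
    have := Algebra.TensorProduct.lTensor_ker (A := A ⧸ p) (Ideal.Quotient.mkₐ k r)
      (Ideal.Quotient.mkₐ_surjective k r)
    rwa [AlgHom.ker_coe, AlgHom.ker_coe, Ideal.Quotient.mkₐ_ker] at this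
  have hkerfQ : RingHom.ker f.toRingHom ≤ Q := hkerf ▸ Ideal.map_comap_le
  let q := Q.map f.toRingHom
  have hq : q.IsPrime := Ideal.map_isPrime_of_surjective hf hkerfQ
  have hQq : Q = q.comap f.toRingHom := by
    rw [Ideal.comap_map_of_surjective' _ hf, sup_eq_left.mpr hkerfQ]
  have hr : r = q.comap
      (Algebra.TensorProduct.includeRight : B →ₐ[k] (A ⧸ p) ⊗[k] B).toRingHom := by
    change Q.comap _ = _
    rw [hQq, Ideal.comap_comap]
    congr 1
  have hkergq : RingHom.ker g.toRingHom ≤ q := by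
    rw [hkerg, Ideal.map_le_iff_le_comap]
    exact hr.le
  let s := q.map g.toRingHom
  have hs : s.IsPrime := Ideal.map_isPrime_of_surjective hg hkergq
  have hqs : q = s.comap g.toRingHom := by
    rw [Ideal.comap_map_of_surjective' _ hg, sup_eq_left.mpr hkergq]
  have hflatA : (Algebra.TensorProduct.includeLeft : A →ₐ[k] A ⊗[k] B).toRingHom.Flat :=
    flat_includeLeft k A B
  have hflatB :
      (Algebra.TensorProduct.includeRight : B →ₐ[k] (A ⧸ p) ⊗[k] B).toRingHom.Flat :=
    (flat_includeLeft k B (A ⧸ p)).comp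
      (.of_bijective (f := (Algebra.TensorProduct.comm k B (A ⧸ p)).toRingHom)
        (Algebra.TensorProduct.comm k B (A ⧸ p)).bijective)
  refine ⟨p, r, inferInstance, inferInstance, s.height, ?_, ?_⟩
  · refine (height_le_add_of_ker_eq hf p Q q rfl hQq hkerf).trans ?_
    gcongr
    exact height_le_add_of_ker_eq hg r q s hr hqs hkerg
  · refine le_trans ?_ (primeDepth_add_le_of_flat hflatA hf p Q q rfl hQq hkerf)
    gcongr
    refine le_trans ?_ (primeDepth_add_le_of_flat hflatB hg r q s hr hqs hkerg)
    gcongr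
    apply height_le_primeDepth_of_comap_eq_bot (FractionRing (A ⧸ p)) (FractionRing (B ⧸ r))
    · refine le_bot_iff.mp fun x hx => ?_
      obtain ⟨x, rfl⟩ := Ideal.Quotient.mk_surjective x
      rw [Ideal.mem_bot, Ideal.Quotient.eq_zero_iff_mem]
      change x ⊗ₜ 1 ∈ Q
      rw [hQq, hqs]
      change g (f (x ⊗ₜ 1)) ∈ s
      simpa [f, g] using hx
    · refine le_bot_iff.mp fun x hx => ?_
      obtain ⟨x, rfl⟩ := Ideal.Quotient.mk_surjective x
      rw [Ideal.mem_bot, Ideal.Quotient.eq_zero_iff_mem]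
      change 1 ⊗ₜ x ∈ Q
      rw [hQq, hqs]
      change g (f (1 ⊗ₜ x)) ∈ s
      simpa [f, g] using hx

lemma ENat.min_add_le_add_add_one {n a b d x y : ℕ∞} (hx : min n a ≤ x)
    (hy : min n b ≤ y + 1) : min n (a + (b + d)) ≤ x + (y + d) + 1 := by
  rcases min_le_iff.mp hx with h | h
  · exact (min_le_left _ _).trans (h.trans (by rw [add_assoc]; exact le_self_add))
  rcases min_le_iff.mp hy with h' | h'
  · refine (min_le_left _ _).trans (h'.trans ?_)
    calc y + 1 ≤ (y + 1) + (x + d) := le_self_add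
      _ = x + (y + d) + 1 := by ring
  · refine (min_le_right _ _).trans ?_
    calc a + (b + d) ≤ x + ((y + 1) + d) := by gcongr
      _ = x + (y + d) + 1 := by ring

theorem tensor_condC_of_condC_and_serreS (k : Type u) [Field k] (n : ℕ)
    (A : Type v) (B : Type w) [CommRing A] [CommRing B] [Algebra k A] [Algebra k B]
    [IsNoetherianRing A] [IsNoetherianRing B] [IsNoetherianRing (A ⊗[k] B)]
    (hA : RingCondC A n) (hB : RingCondC B n)
    (hS : RingSerreCondS A n ∨ RingSerreCondS B n) :
    RingCondC (A ⊗[k] B) n := by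
  rw [ringCondC_iff] at hA hB ⊢
  rw [ringSerreCondS_iff, ringSerreCondS_iff] at hS
  intro Q _
  obtain ⟨p, r, _, _, d, hheight, hdepth⟩ := exists_height_le_and_le_primeDepth Q
  refine (min_le_min_left _ hheight).trans (le_trans ?_ (add_le_add_left hdepth 1))
  rcases hS with hS | hS
  · exact ENat.min_add_le_add_add_one (hS p) (hB r)
  · rw [add_left_comm, add_left_comm (primeDepth p)]
    exact ENat.min_add_le_add_add_one (hS r) (hA p)

end
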